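/- Let G be a graph with a circuit C and ω : E(G) → Z⁺ with ω(C) ≤ 35. If there is a Z₂×Z₂-flow f of G such that E(G) − E(C) ⊆ supp(f), then there is a Z₂×Z₂-flow g of G such that E(G) − E(C) ⊆ supp(g) and ω(E_{g=(0,0)}(C)) < ω(C)/4. -/

import Mathlib

open Finset

/-- The number of endpoints of the (possibly looped) edge `s` equal to `v`
(a loop at `v` counts twice). -/
def edgeCount {V : Type} [DecidableEq V] (s : Sym2 V) (v : V) : ℕ :=
  Sym2.lift ⟨fun a b => (if a = v then 1 else 0) + (if b = v then 1 else 0),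
    fun a b => by dsimp; omega⟩ s

/-- A `ℤ₂ × ℤ₂`-flow of a multigraph with edge-ends map `ends`:
the values on edges incident with a vertex (loops counted twice) sum to `(0,0)`. -/
def IsFlow {V E : Type} [DecidableEq V] [Fintype E] (ends : E → Sym2 V)
    (f : E → ZMod 2 × ZMod 2) : Prop :=
  ∀ v : V, ∑ e : E, edgeCount (ends e) v • f e = 0

/-- An even subgraph (cycle): every vertex has even degree. -/
def IsEvenSub {V E : Type} [DecidableEq V] (ends : E → Sym2 V) (S : Finset E) : Prop :=
  ∀ v : V, Even (∑ e ∈ S, edgeCount (ends e) v)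

/-- A circuit: a nonempty connected 2-regular subgraph, given by its edge set. -/
def IsCircuit {V E : Type} [DecidableEq V] (ends : E → Sym2 V) (CE : Finset E) : Prop :=
  CE.Nonempty ∧
  (∀ v : V, (∑ e ∈ CE, edgeCount (ends e) v = 0) ∨ (∑ e ∈ CE, edgeCount (ends e) v = 2)) ∧
  ∀ e₁ ∈ CE, ∀ e₂ ∈ CE,
    Relation.ReflTransGen (fun a b => ∃ v : V, v ∈ ends a ∧ v ∈ ends b ∧ a ∈ CE ∧ b ∈ CE) e₁ e₂


/-- The set of `T`-positions in `(i, j]` is closed under the pairing `σ`. -/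
def Clo (T : ℕ → Prop) (σ : ℕ → ℕ) (i j : ℕ) : Prop :=
  ∀ v, i < v → v ≤ j → T v → i < σ v ∧ σ v ≤ j

/-- `σ` is a fixed point free involution of `T`. -/
def Pairing (T : ℕ → Prop) (σ : ℕ → ℕ) : Prop :=
  ∀ v, T v → T (σ v) ∧ σ (σ v) = v ∧ σ v ≠ v

open Classical in
/-- Weight of a position: `1` for endpoints of mixed chords, `-2` for colour changes off `T`. -/
noncomputable def wt (T : ℕ → Prop) (σ : ℕ → ℕ) (z : ℕ → Bool) (v : ℕ) : ℤ :=
  if T v then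
    (if ((z (v - 1)) ^^ (z v)) = ((z (σ v - 1)) ^^ (z (σ v))) then 0 else 1)
  else (if z (v - 1) = z v then 0 else -2)

section comb
variable {T : ℕ → Prop} {σ : ℕ → ℕ} {z : ℕ → Bool}

lemma clo_self (i : ℕ) : Clo T σ i i := fun v h1 h2 => by omega

lemma clo_right (hp : Pairing T σ) {i k j : ℕ} (hik : i ≤ k) (h1 : Clo T σ i j)
    (h2 : Clo T σ i k) : Clo T σ k j := by
  intro v hv hv2 hT
  obtain ⟨a, b, c⟩ := hp v hT
  obtain ⟨d, e⟩ := h1 v (by omega) hv2 hT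
  refine ⟨?_, e⟩
  by_contra hlt
  have := h2 (σ v) d (by omega) a
  omega

lemma clo_left (hp : Pairing T σ) {i k j : ℕ} (hkj : k ≤ j) (h1 : Clo T σ i j)
    (h2 : Clo T σ k j) : Clo T σ i k := by
  intro v hv hv2 hT
  obtain ⟨a, b, c⟩ := hp v hT
  obtain ⟨d, e⟩ := h1 v hv (by omega) hT
  refine ⟨d, ?_⟩
  by_contra hlt
  have := h2 (σ v) (by omega) e a
  omega

lemma clo_inter {a b c d : ℕ} (hab : a ≤ b) (hcd : c ≤ d)
    (h1 : Clo T σ a c) (h2 : Clo T σ b d) : Clo T σ b c := by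
  intro v hv hv2 hT
  exact ⟨(h2 v hv (by omega) hT).1, (h1 v (by omega) hv2 hT).2⟩

lemma clo_union {a b c d : ℕ} (hab : a ≤ b) (hbc : b ≤ c) (hcd : c ≤ d)
    (h1 : Clo T σ a c) (h2 : Clo T σ b d) : Clo T σ a d := by
  intro v hv hv2 hT
  by_cases h : v ≤ c
  · have := h1 v hv h hT; omega
  · have := h2 v (by omega) hv2 hT; omega

lemma sum_split (F : ℕ → ℤ) {i k j : ℕ} (hik : i ≤ k) (hkj : k ≤ j) :
    ∑ v ∈ Ioc i j, F v = ∑ v ∈ Ioc i k, F v + ∑ v ∈ Ioc k j, F v :=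
  (Finset.sum_Ioc_consecutive F hik hkj).symm

lemma sum_one (F : ℕ → ℤ) (i : ℕ) : ∑ v ∈ Ioc i (i + 1), F v = F (i + 1) := by
  simp

lemma wt_le_one (v : ℕ) : wt T σ z v ≤ 1 := by
  unfold wt; split_ifs <;> norm_num

lemma wt_pair (hp : Pairing T σ) {v : ℕ} (hv : T v) : wt T σ z (σ v) = wt T σ z v := by
  obtain ⟨a, b, c⟩ := hp v hv
  unfold wt
  rw [if_pos hv, if_pos a, b]
  simp only [eq_comm]

lemma sum_even (hp : Pairing T σ) {i j : ℕ} (h : Clo T σ i j) :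
    Even (∑ v ∈ Ioc i j, wt T σ z v) := by
  classical
  rw [← ZMod.intCast_eq_zero_iff_even]
  push_cast
  apply Finset.sum_involution (fun v _ => if T v then σ v else v)
  · intro v hv
    by_cases hT : T v
    · simp only [hT, if_true]
      rw [wt_pair hp hT]
      exact CharTwo.add_self_eq_zero _
    · simp only [hT, if_false]
      exact CharTwo.add_self_eq_zero _
  · intro v hv hne
    by_cases hT : T v
    · simp only [hT, if_true]
      exact (hp v hT).2.2
    · exfalso
      apply hne
      unfold wt
      rw [if_neg hT]
      split_ifs
      · simp
      · decide
  · intro v hv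
    by_cases hT : T v
    · simp only [hT, if_true]
      rw [mem_Ioc] at hv ⊢
      exact h v hv.1 hv.2 hT
    · simpa only [hT, if_false] using hv
  · intro v hv
    by_cases hT : T v
    · simp only [hT, if_true, (hp v hT).1, (hp v hT).2.1]
    · simp only [hT, if_false]

/-- Weight bound for closed intervals. -/
def Bd (T : ℕ → Prop) (σ : ℕ → ℕ) (z : ℕ → Bool) (i j : ℕ) : Prop :=
  ∑ v ∈ Ioc i j, wt T σ z v ≤ if z i = z j then 0 else -2

lemma bd_trans {i k j : ℕ} (hik : i ≤ k) (hkj : k ≤ j)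
    (h1 : Bd T σ z i k) (h2 : Bd T σ z k j) : Bd T σ z i j := by
  unfold Bd at *
  rw [sum_split _ hik hkj]
  cases hi : z i <;> cases hj : z j <;> cases hk : z k <;> simp_all <;> omega

lemma bd_two {i k j : ℕ} (hik : i ≤ k) (hkj : k ≤ j) (hz : z k ≠ z i)
    (h1 : Bd T σ z i k) (h2 : Bd T σ z k j) :
    ∑ v ∈ Ioc i j, wt T σ z v ≤ if z i = z j then -4 else -2 := by
  unfold Bd at *
  rw [sum_split _ hik hkj]
  cases hi : z i <;> cases hj : z j <;> cases hk : z k <;> simp_all <;> omega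

variable {n : ℕ}

/-- the chain argument -/
lemma chain (hp : Pairing T σ)
    (hbi : ∀ p ≤ n, ∃ q ≤ n, z q ≠ z p ∧
      ((p ≤ q ∧ Clo T σ p q) ∨ (q ≤ p ∧ Clo T σ q p)))
    {i j : ℕ} (hjn : j ≤ n) (hij : Clo T σ i j)
    (hind : ∀ s, i < s → s < j → ¬ Clo T σ i s)
    (ih : ∀ a b, a ≤ b → b ≤ n → b - a < j - i → Clo T σ a b → Bd T σ z a b) :
    ∀ m p, j - p = m → i < p → p < j →
      (∀ q s, q < p → p ≤ s → s < j → ¬ Clo T σ q s) →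
      (∃ p', p ≤ p' ∧ p' < j ∧ Clo T σ p p' ∧
        (∀ s, p' < s → s < j → ¬ Clo T σ p s) ∧
        ∑ v ∈ Ioc p p', wt T σ z v ≤ if z p = z p' then -4 else -2) ∧
      ∑ v ∈ Ioc p j, wt T σ z v ≤ -1 ∧
      (¬ Clo T σ p (j - 1) → ∑ v ∈ Ioc p j, wt T σ z v ≤ -2) := by
  intro m
  induction m using Nat.strong_induction_on with
  | _ m ihm =>
  intro p hm hip hpj hinv
  classical
  -- the last member of the cell of `p` before `j`
  obtain ⟨p', hp'1, hp'2, hp'3, hp'4⟩ : ∃ p', p ≤ p' ∧ p' < j ∧ Clo T σ p p' ∧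
      (∀ s, p' < s → s < j → ¬ Clo T σ p s) := by
    have hne : ((Ico p j).filter (fun s => Clo T σ p s)).Nonempty :=
      ⟨p, by simp [hpj, clo_self]⟩
    refine ⟨((Ico p j).filter (fun s => Clo T σ p s)).max' hne, ?_⟩
    have hmem := Finset.max'_mem _ hne
    rw [mem_filter, mem_Ico] at hmem
    refine ⟨hmem.1.1, hmem.1.2, hmem.2, ?_⟩
    intro s hs hsj hc
    have := Finset.le_max' ((Ico p j).filter (fun s => Clo T σ p s)) s
      (by rw [mem_filter, mem_Ico]; exact ⟨⟨by omega, hsj⟩, hc⟩)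
    omega
  have hcell : ∑ v ∈ Ioc p p', wt T σ z v ≤ if z p = z p' then -4 else -2 := by
    obtain ⟨q, hqn, hzq, hq | hq⟩ := hbi p (by omega)
    · obtain ⟨hpq, hc⟩ := hq
      have hqj : q < j := by
        by_contra hlt
        have h1 : Clo T σ p j := clo_inter (by omega) (by omega) hij hc
        exact hind p hip hpj (clo_left hp (by omega) hij h1)
      have hqp' : q ≤ p' := by
        by_contra hlt
        exact hp'4 q (by omega) hqj hc
      exact bd_two hpq hqp' hzq (ih p q hpq hqn (by omega) hc)
        (ih q p' hqp' (by omega) (by omega) (clo_right hp hpq hp'3 hc))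
    · obtain ⟨hqp, hc⟩ := hq
      rcases Nat.eq_or_lt_of_le hqp with h | h
      · subst h; exact absurd rfl hzq
      · exact absurd hc (hinv q p h le_rfl hpj)
  refine ⟨⟨p', hp'1, hp'2, hp'3, hp'4, hcell⟩, ?_⟩
  have hcell2 : ∑ v ∈ Ioc p p', wt T σ z v ≤ -2 := by
    split_ifs at hcell <;> omega
  have hstep : ∑ v ∈ Ioc p (p' + 1), wt T σ z v ≤ -1 := by
    rw [sum_split _ hp'1 (Nat.le_succ p'), sum_one]
    have := wt_le_one (T := T) (σ := σ) (z := z) (p' + 1)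
    omega
  by_cases hlast : p' + 1 = j
  · rw [hlast] at hstep
    refine ⟨hstep, fun hn => absurd ?_ hn⟩
    have : j - 1 = p' := by omega
    rw [this]; exact hp'3
  · have hnext := ihm (j - (p' + 1)) (by omega) (p' + 1) rfl (by omega) (by omega) (by
      intro q s hq hs hsj hc
      by_cases hqp : q < p
      · exact hinv q s hqp (by omega) hsj hc
      · exact hp'4 s (by omega) hsj
          (clo_union (by omega) (by omega) (by omega) hp'3 hc))
    have h2 := hnext.2.1
    have h3 : ∑ v ∈ Ioc p j, wt T σ z v ≤ -2 := by
      rw [sum_split _ (show p ≤ p' + 1 by omega) (show p' + 1 ≤ j by omega)]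
      omega
    exact ⟨by omega, fun _ => h3⟩

lemma bd_all (hp : Pairing T σ)
    (hbi : ∀ p ≤ n, ∃ q ≤ n, z q ≠ z p ∧
      ((p ≤ q ∧ Clo T σ p q) ∨ (q ≤ p ∧ Clo T σ q p))) :
    ∀ m i j, j - i = m → i ≤ j → j ≤ n → Clo T σ i j → Bd T σ z i j := by
  intro m
  induction m using Nat.strong_induction_on with
  | _ m ihm =>
  intro i j hm hij hjn hc
  have ih : ∀ a b, a ≤ b → b ≤ n → b - a < j - i → Clo T σ a b → Bd T σ z a b :=
    fun a b hab hb hlt hcl => ihm (b - a) (by omega) a b rfl hab hb hcl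
  by_cases hdec : ∃ s, i < s ∧ s < j ∧ Clo T σ i s
  · obtain ⟨s, h1, h2, h3⟩ := hdec
    exact bd_trans h1.le h2.le (ih i s h1.le (by omega) (by omega) h3)
      (ih s j h2.le hjn (by omega) (clo_right hp h1.le hc h3))
  have hind : ∀ s, i < s → s < j → ¬ Clo T σ i s := fun s h1 h2 h3 => hdec ⟨s, h1, h2, h3⟩
  rcases Nat.eq_or_lt_of_le hij with h | h
  · subst h; simp [Bd]
  by_cases hT : T (i + 1)
  swap
  · have hj : j = i + 1 := by
      by_contra hne
      refine hind (i + 1) (by omega) (by omega) ?_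
      intro v hv hv2 hTv
      have : v = i + 1 := by omega
      subst this; exact absurd hTv hT
    subst hj
    unfold Bd wt
    rw [sum_one, if_neg hT]
    simp
  obtain ⟨hT2, hσσ, hσne⟩ := hp (i + 1) hT
  have hσm := hc (i + 1) (by omega) (by omega) hT
  have hj2 : i + 1 < j := by omega
  have hch := chain hp hbi hjn hc hind ih (j - (i + 1)) (i + 1) rfl (by omega) hj2 (by
    intro q s hq hs hsj hcl
    refine hind s (by omega) hsj ?_
    exact clo_inter (a := q) (b := i) (c := s) (d := j) (by omega) (by omega) hcl hc)
  obtain ⟨⟨p', hp1, hp2, hp3, hp4, hp5⟩, -, hcr⟩ := hch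
  have hsplit : ∑ v ∈ Ioc i j, wt T σ z v = wt T σ z (i + 1) + ∑ v ∈ Ioc (i + 1) j, wt T σ z v := by
    rw [sum_split _ (Nat.le_succ i) hj2.le, sum_one]
  by_cases hin : Clo T σ (i + 1) (j - 1)
  · -- noncrossing chord
    have hσj : σ (i + 1) = j := by
      by_contra hne
      have := hin (σ (i + 1)) (by omega) (by omega) hT2
      omega
    have hp' : p' = j - 1 := by
      by_contra hne
      exact hp4 (j - 1) (by omega) (by omega) hin
    obtain ⟨k, rfl⟩ : ∃ k, j = k + 1 := ⟨j - 1, by omega⟩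
    simp only [Nat.add_sub_cancel] at hp'
    subst hp'
    have hw : wt T σ z (p' + 1) = wt T σ z (i + 1) := by rw [← hσj]; exact wt_pair hp hT
    have hw2 : wt T σ z (i + 1) =
        if (z i ^^ z (i + 1)) = (z p' ^^ z (p' + 1)) then 0 else 1 := by
      unfold wt; rw [if_pos hT, hσj]; simp
    unfold Bd
    rw [hsplit, sum_split _ hp1 (Nat.le_succ p'), sum_one, hw, hw2]
    generalize ∑ v ∈ Ioc (i + 1) p', wt T σ z v = S at hp5 ⊢
    revert hp5
    cases z i <;> cases z (i + 1) <;> cases z p' <;> cases z (p' + 1) <;> simp <;> omega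
  · have h2 := hcr hin
    have h1 := wt_le_one (T := T) (σ := σ) (z := z) (i + 1)
    obtain ⟨r, hr⟩ := sum_even (z := z) hp hc
    unfold Bd
    split_ifs <;> omega

/-- The main counting inequality. -/
lemma count_main (hp : Pairing T σ)
    (hbi : ∀ p ≤ n, ∃ q ≤ n, z q ≠ z p ∧
      ((p ≤ q ∧ Clo T σ p q) ∨ (q ≤ p ∧ Clo T σ q p)))
    (hc : Clo T σ 0 n) (hz : z 0 = z n) : ∑ v ∈ Ioc 0 n, wt T σ z v ≤ -4 := by
  obtain ⟨q, hqn, hzq, hq⟩ := hbi 0 (by omega)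
  have hq' : Clo T σ 0 q := by
    rcases hq with ⟨_, h⟩ | ⟨h0, h⟩
    · exact h
    · have : q = 0 := by omega
      subst this; exact h
  have := bd_two (Nat.zero_le q) hqn hzq (bd_all hp hbi _ 0 q rfl (by omega) hqn hq')
    (bd_all hp hbi _ q n rfl hqn le_rfl (clo_right hp (by omega) hc hq'))
  rwa [if_pos hz] at this

end comb
/-- Pair up the members of a finite set inside even equivalence classes. -/
lemma exists_pairing (r : ℕ → ℕ → Prop) (hr : Equivalence r) :
    ∀ (m : ℕ) (s : Finset ℕ), s.card = m →
      (∀ i ∈ s, Even ((open Classical in s.filter (r i)).card)) →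
      ∃ σ : ℕ → ℕ, ∀ v ∈ s, σ v ∈ s ∧ σ (σ v) = v ∧ σ v ≠ v ∧ r v (σ v) := by
  classical
  intro m
  induction m using Nat.strong_induction_on with
  | _ m ih =>
  intro s hs hev
  rcases s.eq_empty_or_nonempty with rfl | ⟨a, ha⟩
  · exact ⟨id, by simp⟩
  have haf : a ∈ s.filter (r a) := by simp [ha, hr.refl a]
  have h1 : ∃ b ∈ s.filter (r a), b ≠ a := by
    by_contra hcon
    push Not at hcon
    have : s.filter (r a) = {a} := by
      ext x; constructor
      · intro hx; simpa using hcon x hx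
      · intro hx; rw [mem_singleton] at hx; subst hx; exact haf
    have h2 := hev a ha
    have h3 : (s.filter (r a)).card = 1 := by rw [this]; simp
    have h4 : Even (s.filter (r a)).card := by convert h2
    rw [h3] at h4
    exact absurd h4 (by decide)
  obtain ⟨b, hb, hba⟩ := h1
  rw [mem_filter] at hb
  obtain ⟨hbs, hrab⟩ := hb
  set s' := (s.erase a).erase b with hs'
  have hbe : b ∈ s.erase a := mem_erase.2 ⟨hba, hbs⟩
  have hcard : s'.card + 2 = s.card := by
    have e1 := card_erase_add_one ha
    have e2 : s'.card + 1 = (s.erase a).card := card_erase_add_one hbe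
    omega
  obtain ⟨σ, hσ⟩ := ih s'.card (by omega) s' rfl (by
    intro i hi
    have his : i ∈ s := mem_of_mem_erase (mem_of_mem_erase hi)
    have h2 : Even (s.filter (r i)).card := by convert hev i his
    have h3 : Even (s'.filter (r i)).card := by
      by_cases hia : r i a
      · have hib : r i b := hr.trans hia hrab
        have : (s'.filter (r i)) = ((s.filter (r i)).erase a).erase b := by
          ext x; simp [hs']; tauto
        have m1 : a ∈ s.filter (r i) := by simp [ha, hia]
        have m2 : b ∈ (s.filter (r i)).erase a := by simp [hbs, hib, hba]
        have e1 := card_erase_add_one m1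
        have e2 := card_erase_add_one m2
        rw [this]
        rw [← e1, ← e2] at h2
        rw [Nat.even_iff] at h2 ⊢
        omega
      · have hib : ¬ r i b := fun h => hia (hr.trans h (hr.symm hrab))
        have : (s'.filter (r i)) = s.filter (r i) := by
          ext x; simp only [hs', mem_filter, mem_erase]
          constructor
          · tauto
          · rintro ⟨hx, hrx⟩
            refine ⟨⟨?_, ?_, hx⟩, hrx⟩
            · rintro rfl; exact hib hrx
            · rintro rfl; exact hia hrx
        rw [this]; exact h2
    convert h3)
  refine ⟨fun v => if v = a then b else if v = b then a else σ v, ?_⟩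
  intro v hv
  by_cases hva : v = a
  · subst hva; simp [hba, hbs, hrab]
  by_cases hvb : v = b
  · subst hvb; simp [hva, ha, hr.symm hrab, Ne.symm hba]
  have hvs' : v ∈ s' := by simp [hs', hva, hvb, hv]
  obtain ⟨q1, q2, q3, q4⟩ := hσ v hvs'
  have q1' : σ v ≠ b ∧ σ v ≠ a ∧ σ v ∈ s := by simpa [hs'] using q1
  simp [hva, hvb, q1', q2, q3, q4]
section trail
variable {V E : Type} [DecidableEq V]

/-- A trail of length `l` inside `CE`. -/
def IsTrail (ends : E → Sym2 V) (CE : Finset E) (l : ℕ) (e : ℕ → E) (v : ℕ → V) : Prop :=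
  (∀ i < l, ∀ j < l, e i = e j → i = j) ∧ ∀ i < l, e i ∈ CE ∧ ends (e i) = s(v i, v (i + 1))

lemma edgeCount_mk (a b w : V) :
    edgeCount s(a, b) w = (if a = w then 1 else 0) + (if b = w then 1 else 0) := rfl

lemma edgeCount_pos {s : Sym2 V} {w : V} : 0 < edgeCount s w ↔ w ∈ s := by
  induction s using Sym2.ind with
  | _ a b =>
  rw [edgeCount_mk, Sym2.mem_iff]
  split_ifs with h1 h2 h2 <;> simp_all [eq_comm]

lemma trail_deg (v : ℕ → V) (w : V) : ∀ l : ℕ,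
    ∑ i ∈ range l, ((if v i = w then 1 else 0) + (if v (i + 1) = w then 1 else 0))
      + (if v l = w then 1 else 0) =
    2 * ∑ i ∈ range l, (if v (i + 1) = w then 1 else 0) + (if v 0 = w then 1 else 0) := by
  intro l
  induction l with
  | zero => simp
  | succ l ih => rw [sum_range_succ, sum_range_succ]; omega

lemma exists_euler [DecidableEq E] (ends : E → Sym2 V) (CE : Finset E) (hC : IsCircuit ends CE) :
    ∃ (n : ℕ) (e : ℕ → E) (v : ℕ → V), 0 < n ∧ IsTrail ends CE n e v ∧ v n = v 0 ∧
      (range n).image e = CE := by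
  classical
  obtain ⟨⟨c, hc⟩, hdeg, hconn⟩ := hC
  -- trails have bounded length
  have hsub : ∀ l e v, IsTrail ends CE l e v → (range l).image e ⊆ CE := by
    intro l e v h x hx
    obtain ⟨i, hi, rfl⟩ := mem_image.1 hx
    exact (h.2 i (mem_range.1 hi)).1
  have hinj : ∀ l e v, IsTrail ends CE l e v → Set.InjOn e (range l : Set ℕ) := by
    intro l e v h i hi j hj hij
    exact h.1 i (by simpa using hi) j (by simpa using hj) hij
  have hbound : ∀ l e v, IsTrail ends CE l e v → l ≤ CE.card := by
    intro l e v h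
    have := card_le_card (hsub l e v h)
    rwa [card_image_of_injOn (hinj l e v h), card_range] at this
  have hone : ∃ e v, IsTrail ends CE 1 e v := by
    obtain ⟨a, b, hab⟩ : ∃ a b, ends c = s(a, b) := by
      induction h : ends c using Sym2.ind with
      | _ a b => exact ⟨a, b, rfl⟩
    refine ⟨fun _ => c, fun i => if i = 0 then a else b, ?_, ?_⟩
    · intro i hi j hj _; omega
    · intro i hi
      have : i = 0 := by omega
      subst this; simp [hc, hab]
  obtain ⟨n, hn, hmax⟩ : ∃ n, (1 ≤ n ∧ ∃ e v, IsTrail ends CE n e v) ∧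
      ∀ e v, ¬ IsTrail ends CE (n + 1) e v := by
    have hP : ∃ e v, IsTrail ends CE (Nat.findGreatest (fun l => ∃ e v, IsTrail ends CE l e v) CE.card) e v := by
      obtain ⟨e, v, h⟩ := hone
      exact Nat.findGreatest_spec (P := fun l => ∃ e v, IsTrail ends CE l e v)
        (hbound 1 e v h) ⟨e, v, h⟩
    refine ⟨_, ⟨?_, hP⟩, ?_⟩
    · obtain ⟨e, v, h⟩ := hone
      exact Nat.le_findGreatest (hbound 1 e v h) ⟨e, v, h⟩
    · intro e v h
      have := Nat.le_findGreatest (P := fun l => ∃ e v, IsTrail ends CE l e v)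
        (hbound _ e v h) ⟨e, v, h⟩
      omega
  obtain ⟨hn1, e, v, ht⟩ := hn
  -- degree inside the trail
  have hsum : ∀ w, ∑ x ∈ (range n).image e, edgeCount (ends x) w =
      ∑ i ∈ range n, ((if v i = w then 1 else 0) + (if v (i + 1) = w then 1 else 0)) := by
    intro w
    rw [sum_image (hinj n e v ht)]
    apply sum_congr rfl
    intro i hi
    rw [(ht.2 i (mem_range.1 hi)).2, edgeCount_mk]
  have hsplit : ∀ w, ∑ x ∈ CE, edgeCount (ends x) w =
      ∑ x ∈ CE \ (range n).image e, edgeCount (ends x) w +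
      ∑ x ∈ (range n).image e, edgeCount (ends x) w := by
    intro w; rw [sum_sdiff (hsub n e v ht)]
  have hclosed : v n = v 0 := by
    by_contra hne
    have h1 := trail_deg v (v n) n
    rw [← hsum] at h1
    rw [if_pos rfl, if_neg (Ne.symm hne)] at h1
    have h2 := hsplit (v n)
    have h3 : 0 < ∑ x ∈ CE \ (range n).image e, edgeCount (ends x) (v n) := by
      rcases hdeg (v n) with h | h <;> omega
    obtain ⟨x, hx, hx0⟩ := exists_ne_zero_of_sum_ne_zero h3.ne'
    rw [mem_sdiff] at hx
    have hmem : v n ∈ ends x := edgeCount_pos.1 (Nat.pos_of_ne_zero hx0)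
    obtain ⟨b, hb⟩ := Sym2.mem_iff_exists.1 hmem
    refine hmax (fun i => if i < n then e i else x) (fun i => if i ≤ n then v i else b) ⟨?_, ?_⟩
    · have hx' : ∀ i < n, e i ≠ x := by
        intro i hi h
        exact hx.2 (mem_image.2 ⟨i, mem_range.2 hi, h⟩)
      intro i hi j hj hij
      by_cases h1 : i < n <;> by_cases h2 : j < n <;> simp only [h1, h2, if_true, if_false] at hij
      · exact ht.1 i h1 j h2 hij
      · exact absurd hij (hx' i h1)
      · exact absurd hij.symm (hx' j h2)
      · omega
    · intro i hi
      by_cases h1 : i < n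
      · have h2 : i ≤ n := by omega
        have h3 : i + 1 ≤ n := by omega
        simp only [h1, h2, h3, if_true]
        exact ht.2 i h1
      · have h2 : i = n := by omega
        subst h2
        simp [hx.1, hb]
  refine ⟨n, e, v, hn1, ht, hclosed, ?_⟩
  apply Subset.antisymm (hsub n e v ht)
  intro x hx
  have h0 : e 0 ∈ CE := (ht.2 0 hn1).1
  have := hconn (e 0) h0 x hx
  induction this with
  | refl => exact mem_image.2 ⟨0, mem_range.2 hn1, rfl⟩
  | tail _ hstep ihs =>
    rename_i y y' _
    obtain ⟨w, hw1, hw2, hy, hy'⟩ := hstep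
    have hyt := ihs hy
    by_contra hnot
    have hw : 1 ≤ edgeCount (ends y') w := edgeCount_pos.2 hw2
    have h2 := hsplit w
    have h3 : edgeCount (ends y') w ≤ ∑ x ∈ CE \ (range n).image e, edgeCount (ends x) w :=
      single_le_sum (f := fun x => edgeCount (ends x) w) (fun _ _ => Nat.zero_le _)
        (mem_sdiff.2 ⟨hy', hnot⟩)
    have h4 : edgeCount (ends y) w ≤ ∑ x ∈ (range n).image e, edgeCount (ends x) w :=
      single_le_sum (f := fun x => edgeCount (ends x) w) (fun _ _ => Nat.zero_le _) hyt
    have h5 : 1 ≤ edgeCount (ends y) w := edgeCount_pos.2 hw1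
    have h6 := trail_deg v w n
    rw [← hsum, hclosed] at h6
    rcases hdeg w with h | h <;> omega
end trail
section main
set_option linter.unusedSectionVars false
variable {V E : Type} [Fintype V] [Fintype E] [DecidableEq V]

/-- The circuit `CE` is enumerated as a closed trail. -/
structure Enum (ends : E → Sym2 V) (CE : Finset E) (n : ℕ) (e : ℕ → E) (v : ℕ → V) : Prop where
  pos : 0 < n
  inj : ∀ i < n, ∀ j < n, e i = e j → i = j
  mem : ∀ i ≤ n, e i ∈ CE
  ends_eq : ∀ i < n, ends (e i) = s(v i, v (i + 1))
  closeV : v n = v 0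
  closeE : e n = e 0
  surj : ∀ x ∈ CE, ∃ i < n, e i = x

variable {ends : E → Sym2 V} {CE : Finset E} {n : ℕ} {e : ℕ → E} {v : ℕ → V}

lemma Enum.sum_CE {A : Type} [AddCommMonoid A] (hE : Enum ends CE n e v) (φ : E → A) :
    ∑ x ∈ CE, φ x = ∑ i ∈ range n, φ (e i) := by
  symm
  apply sum_bij (fun i _ => e i)
  · intro i hi; exact hE.mem i (mem_range.1 hi).le
  · intro i hi j hj h; exact hE.inj i (mem_range.1 hi) j (mem_range.1 hj) h
  · intro x hx
    obtain ⟨i, hi, rfl⟩ := hE.surj x hx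
    exact ⟨i, mem_range.2 hi, rfl⟩
  · intros; rfl

lemma sum_Ioc_range {A : Type} [AddCommMonoid A] (φ : ℕ → A) (n : ℕ) :
    ∑ i ∈ Ioc 0 n, φ i = ∑ i ∈ range n, φ (i + 1) := by
  symm
  apply sum_bij (fun i _ => i + 1)
  · intro i hi; rw [mem_range] at hi; rw [mem_Ioc]; omega
  · intro i hi j hj h; omega
  · intro x hx
    rw [mem_Ioc] at hx
    exact ⟨x - 1, mem_range.2 (by omega), by omega⟩
  · intros; rfl

/-- Boundary of a function on the circuit. -/
lemma Enum.boundary {A : Type} [AddCommMonoid A] [IsCancelAdd A]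
    (hE : Enum ends CE n e v) (g : E → A) (w : V) :
    ∑ x ∈ CE, edgeCount (ends x) w • g x =
      ∑ i ∈ Ioc 0 n, if v i = w then g (e (i - 1)) + g (e i) else 0 := by
  rw [hE.sum_CE, sum_Ioc_range]
  have h1 : ∑ i ∈ range n, edgeCount (ends (e i)) w • g (e i) =
      ∑ i ∈ range n, ((if v i = w then g (e i) else 0) + (if v (i + 1) = w then g (e i) else 0)) := by
    apply sum_congr rfl
    intro i hi
    rw [hE.ends_eq i (mem_range.1 hi), edgeCount_mk, add_smul]
    congr 1 <;> split_ifs <;> simp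
  have h2 : ∑ i ∈ range n, (if v i = w then g (e i) else 0) =
      ∑ i ∈ range n, (if v (i + 1) = w then g (e (i + 1)) else 0) := by
    have h3 := sum_range_succ (fun i => if v i = w then g (e i) else 0) n
    have h4 := sum_range_succ' (fun i => if v i = w then g (e i) else 0) n
    rw [h3, hE.closeV, hE.closeE] at h4
    exact add_right_cancel h4
  rw [h1, sum_add_distrib, h2, ← sum_add_distrib]
  apply sum_congr rfl
  intro i hi
  simp only [Nat.add_sub_cancel]
  split_ifs
  · rw [add_comm]
  · simp

/-- Jump of `g` at position `i` of the closed trail. -/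
def jump (e : ℕ → E) (g : E → ZMod 2 × ZMod 2) (i : ℕ) : ZMod 2 × ZMod 2 :=
  g (e (i - 1)) + g (e i)

/-- `a` and `b` are linked by off-circuit edges whose value has nonzero first coordinate. -/
def Conn (ends : E → Sym2 V) (CE : Finset E) (g : E → ZMod 2 × ZMod 2) (a b : V) : Prop :=
  ∃ h : E → ZMod 2, (∀ x, h x ≠ 0 → x ∉ CE ∧ (g x).1 ≠ 0) ∧
    ∀ w, ∑ x, edgeCount (ends x) w • h x = (if a = w then 1 else 0) + (if b = w then 1 else 0)

lemma conn_equiv (ends : E → Sym2 V) (CE : Finset E) (g : E → ZMod 2 × ZMod 2) :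
    Equivalence (Conn ends CE g) := by
  refine ⟨?_, ?_, ?_⟩
  · intro a
    exact ⟨0, by simp, fun w => by simp [CharTwo.add_self_eq_zero]⟩
  · rintro a b ⟨h, h1, h2⟩
    exact ⟨h, h1, fun w => by rw [h2, add_comm]⟩
  · rintro a b c ⟨h, h1, h2⟩ ⟨k, k1, k2⟩
    refine ⟨h + k, ?_, ?_⟩
    · intro x hx
      by_cases hh : h x = 0
      · exact k1 x (by simpa [hh] using hx)
      · exact h1 x hh
    · intro w
      simp only [Pi.add_apply, smul_add, sum_add_distrib, h2, k2]
      have := CharTwo.add_self_eq_zero (if b = w then (1 : ZMod 2) else 0)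
      linear_combination this

lemma conn_edge [DecidableEq E] (g : E → ZMod 2 × ZMod 2) {x : E} (hx : x ∉ CE)
    (hg : (g x).1 ≠ 0) {a b : V} (hab : ends x = s(a, b)) : Conn ends CE g a b := by
  refine ⟨Pi.single x 1, ?_, ?_⟩
  · intro y hy
    by_cases h : y = x
    · subst h; exact ⟨hx, hg⟩
    · simp [h] at hy
  · intro w
    rw [sum_eq_single x]
    · rw [hab, edgeCount_mk]
      simp
    · intro y _ hy; simp [hy]
    · simp

open Classical in
lemma isFlow_split (hE : Enum ends CE n e v) {g : E → ZMod 2 × ZMod 2} (hg : IsFlow ends g)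
    (w : V) : ∑ x ∈ univ.filter (fun x => x ∉ CE), edgeCount (ends x) w • g x =
      ∑ i ∈ Ioc 0 n, if v i = w then jump e g i else 0 := by
  have h1 := hg w
  rw [← sum_filter_add_sum_filter_not univ (fun x => x ∉ CE)] at h1
  have h2 : (univ.filter (fun x => ¬ x ∉ CE)) = CE := by ext; simp
  rw [h2, hE.boundary] at h1
  have h3 := CharTwo.add_self_eq_zero (∑ i ∈ Ioc 0 n, if v i = w then jump e g i else 0)
  exact add_right_cancel (h1.trans h3.symm)

open Classical in
lemma class_even (hE : Enum ends CE n e v) {g : E → ZMod 2 × ZMod 2} (hg : IsFlow ends g)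
    (a : V) : Even ((((Ioc 0 n).filter (fun i => (jump e g i).1 ≠ 0)).filter
      (fun i => Conn ends CE g a (v i))).card) := by
  rw [← ZMod.natCast_eq_zero_iff_even]
  have h1 : ∀ w, ∑ x ∈ univ.filter (fun x => x ∉ CE), edgeCount (ends x) w • (g x).1 =
      ∑ i ∈ Ioc 0 n, if v i = w then (jump e g i).1 else 0 := by
    intro w
    have := congrArg Prod.fst (isFlow_split hE hg w)
    rw [Prod.fst_sum, Prod.fst_sum] at this
    simpa only [apply_ite Prod.fst, Prod.smul_fst, Prod.fst_zero] using this
  have h2 : ∑ w, (if Conn ends CE g a w then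
      ∑ x ∈ univ.filter (fun x => x ∉ CE), edgeCount (ends x) w • (g x).1 else 0) = 0 := by
    have : ∀ w, (if Conn ends CE g a w then
      ∑ x ∈ univ.filter (fun x => x ∉ CE), edgeCount (ends x) w • (g x).1 else 0) =
      ∑ x ∈ univ.filter (fun x => x ∉ CE),
        if Conn ends CE g a w then edgeCount (ends x) w • (g x).1 else 0 := by
      intro w; split_ifs <;> simp
    simp only [this]
    rw [sum_comm]
    apply sum_eq_zero
    intro x hx
    rw [mem_filter] at hx
    by_cases hgx : (g x).1 = 0
    · simp [hgx]
    obtain ⟨b, c, hbc⟩ : ∃ b c, ends x = s(b, c) := by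
      induction h : ends x using Sym2.ind with
      | _ b c => exact ⟨b, c, rfl⟩
    have hconn := conn_edge g hx.2 hgx hbc
    have hiff : Conn ends CE g a b ↔ Conn ends CE g a c :=
      ⟨fun h => (conn_equiv ends CE g).trans h hconn,
       fun h => (conn_equiv ends CE g).trans h ((conn_equiv ends CE g).symm hconn)⟩
    have h3 : ∀ w, (if Conn ends CE g a w then edgeCount (ends x) w • (g x).1 else 0) =
        (if b = w then (if Conn ends CE g a b then (g x).1 else 0) else 0) +
        (if c = w then (if Conn ends CE g a b then (g x).1 else 0) else 0) := by
      intro w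
      rw [hbc, edgeCount_mk, add_smul]
      by_cases h1 : b = w
      · subst h1
        by_cases h2 : c = b
        · subst h2; simp; split_ifs <;> simp
        · simp [h2]
      · by_cases h2 : c = w
        · subst h2; simp [h1, hiff]
        · simp [h1, h2]
    simp only [h3, sum_add_distrib, sum_ite_eq, mem_univ, if_true]
    exact CharTwo.add_self_eq_zero _
  simp only [h1] at h2
  have h4 : ∑ w, (if Conn ends CE g a w then
      ∑ i ∈ Ioc 0 n, (if v i = w then (jump e g i).1 else 0) else 0) =
      ∑ i ∈ Ioc 0 n, if Conn ends CE g a (v i) then (jump e g i).1 else 0 := by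
    have : ∀ w, (if Conn ends CE g a w then
        ∑ i ∈ Ioc 0 n, (if v i = w then (jump e g i).1 else 0) else 0) =
        ∑ i ∈ Ioc 0 n, (if v i = w then
          (if Conn ends CE g a (v i) then (jump e g i).1 else 0) else 0) := by
      intro w
      split_ifs with h
      · apply sum_congr rfl
        intro i _
        by_cases hw : v i = w
        · subst hw; simp [h]
        · simp [hw]
      · symm; apply sum_eq_zero
        intro i _
        by_cases hw : v i = w
        · subst hw; simp [h]
        · simp [hw]
    simp only [this]
    rw [sum_comm]
    simp
  rw [h4] at h2
  rw [filter_filter, card_filter, Nat.cast_sum]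
  refine Eq.trans ?_ h2
  apply sum_congr rfl
  intro i _
  by_cases hc : Conn ends CE g a (v i)
  · have : ∀ t : ZMod 2, (((if t ≠ 0 then 1 else 0 : ℕ)) : ZMod 2) = t := by decide
    simpa [hc] using this (jump e g i).1
  · simp [hc]

/-- A closed chain through a linked pair. -/
lemma exists_chain [DecidableEq E] (hE : Enum ends CE n e v) {g : E → ZMod 2 × ZMod 2} {a b : ℕ}
    (ha : 0 < a) (hab : a ≤ b) (hb : b ≤ n) (hc : Conn ends CE g (v a) (v b)) :
    ∃ H : E → ZMod 2, (∀ w, ∑ x, edgeCount (ends x) w • H x = 0) ∧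
      (∀ x, x ∉ CE → (g x).1 = 0 → H x = 0) ∧
      ∀ q ≤ n, H (e q) = if a ≤ q ∧ q < b then 1 else 0 := by
  obtain ⟨h, h1, h2⟩ := hc
  have hz : ∀ x ∈ CE, h x = 0 := by
    intro x hx
    by_contra hne
    exact (h1 x hne).1 hx
  refine ⟨fun x => h x + ∑ p ∈ Ico a b, (Pi.single (e p) 1 : E → ZMod 2) x, ?_, ?_, ?_⟩
  · intro w
    simp only [smul_add, sum_add_distrib, h2, smul_sum]
    rw [sum_comm]
    have h3 : ∀ p ∈ Ico a b, ∑ x, edgeCount (ends x) w • (Pi.single (e p) 1 : E → ZMod 2) x =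
        (if v p = w then 1 else 0) + (if v (p + 1) = w then 1 else 0) := by
      intro p hp
      rw [mem_Ico] at hp
      rw [sum_eq_single (e p)]
      · rw [hE.ends_eq p (by omega), edgeCount_mk]; simp
      · intro y _ hy; simp [hy]
      · simp
    rw [sum_congr rfl h3]
    have h4 : ∀ b, a ≤ b → ∑ p ∈ Ico a b, (((if v p = w then 1 else 0) +
        (if v (p + 1) = w then 1 else 0) : ZMod 2)) =
        (if v a = w then 1 else 0) + (if v b = w then 1 else 0) := by
      intro b hb
      induction b, hb using Nat.le_induction with
      | base => simp [CharTwo.add_self_eq_zero]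
      | succ b hb ih =>
        rw [sum_Ico_succ_top hb, ih]
        have := CharTwo.add_self_eq_zero (if v b = w then (1 : ZMod 2) else 0)
        linear_combination this
    rw [h4 b hab]
    exact CharTwo.add_self_eq_zero _
  · intro x hx hg
    have e1 : h x = 0 := by
      by_contra hne
      exact (h1 x hne).2 hg
    have e2 : ∑ p ∈ Ico a b, (Pi.single (e p) 1 : E → ZMod 2) x = 0 := by
      apply sum_eq_zero
      intro p hp
      rw [mem_Ico] at hp
      have : x ≠ e p := fun hh => hx (hh ▸ hE.mem p (by omega))
      simp [this]
    simp only [e1, e2, add_zero]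
  · intro q hq
    have key : ∀ q < n, h (e q) + ∑ p ∈ Ico a b, (Pi.single (e p) 1 : E → ZMod 2) (e q) =
        if a ≤ q ∧ q < b then 1 else 0 := by
      intro q hq
      rw [hz (e q) (hE.mem q hq.le), zero_add]
      have : ∀ p ∈ Ico a b, (Pi.single (e p) 1 : E → ZMod 2) (e q) = if q = p then 1 else 0 := by
        intro p hp
        rw [mem_Ico] at hp
        rw [Pi.single_apply]
        by_cases hpq : q = p
        · simp [hpq]
        · have : e q ≠ e p := fun hh => hpq (hE.inj q hq p (by omega) hh)
          simp [hpq, this]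
      rw [sum_congr rfl this, sum_ite_eq]
      simp only [mem_Ico]
    rcases Nat.eq_or_lt_of_le hq with h | h
    · subst h
      simp only [hE.closeE]
      rw [key 0 hE.pos, if_neg (by omega), if_neg (by omega)]
    · exact key q h

/-- Admissible flows. -/
def Valid (ends : E → Sym2 V) (CE : Finset E) (g : E → ZMod 2 × ZMod 2) : Prop :=
  IsFlow ends g ∧ ∀ x, x ∉ CE → g x ≠ 0

lemma isFlow_iff (g : E → ZMod 2 × ZMod 2) : IsFlow ends g ↔
    (∀ w, ∑ x, edgeCount (ends x) w • (g x).1 = 0) ∧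
    (∀ w, ∑ x, edgeCount (ends x) w • (g x).2 = 0) := by
  unfold IsFlow
  rw [← forall_and]
  apply forall_congr'
  intro w
  rw [Prod.ext_iff, Prod.fst_sum, Prod.snd_sum]
  simp

/-- Flip a family of closed chains. -/
def flipS (g : E → ZMod 2 × ZMod 2) (H : ℕ → E → ZMod 2) (S : Finset ℕ) (x : E) :
    ZMod 2 × ZMod 2 := ((g x).1, (g x).2 + ∑ u ∈ S, H u x)

lemma flip_valid {g : E → ZMod 2 × ZMod 2} (hg : Valid ends CE g) (H : ℕ → E → ZMod 2)
    (S : Finset ℕ) (h1 : ∀ u ∈ S, ∀ w, ∑ x, edgeCount (ends x) w • H u x = 0)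
    (h2 : ∀ u ∈ S, ∀ x, x ∉ CE → (g x).1 = 0 → H u x = 0) :
    Valid ends CE (flipS g H S) := by
  obtain ⟨hf, hs⟩ := hg
  rw [isFlow_iff] at hf
  refine ⟨(isFlow_iff _).2 ⟨hf.1, ?_⟩, ?_⟩
  · intro w
    simp only [flipS, smul_add, sum_add_distrib, hf.2 w, zero_add, smul_sum]
    rw [sum_comm]
    exact sum_eq_zero fun u hu => h1 u hu w
  · intro x hx h0
    simp only [flipS, Prod.mk_eq_zero] at h0
    have : ∑ u ∈ S, H u x = 0 := sum_eq_zero fun u hu => h2 u hu x hx h0.1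
    rw [this, add_zero] at h0
    exact hs x hx (Prod.ext h0.1 h0.2)

lemma swap_valid {g : E → ZMod 2 × ZMod 2} (hg : Valid ends CE g) :
    Valid ends CE (fun x => (g x).swap) := by
  obtain ⟨hf, hs⟩ := hg
  rw [isFlow_iff] at hf
  refine ⟨(isFlow_iff _).2 ⟨hf.2, hf.1⟩, ?_⟩
  intro x hx h0
  apply hs x hx
  have h1 : (g x).swap = 0 := h0
  rw [← Prod.swap_swap (g x), h1]; rfl

open Classical in
lemma const_valid (hE : Enum ends CE n e v) {g : E → ZMod 2 × ZMod 2} (hg : Valid ends CE g)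
    (c : ZMod 2 × ZMod 2) : Valid ends CE (fun x => g x + if x ∈ CE then c else 0) := by
  obtain ⟨hf, hs⟩ := hg
  refine ⟨?_, ?_⟩
  · intro w
    simp only [smul_add, sum_add_distrib]
    rw [hf w, zero_add]
    have h1 : ∑ x, edgeCount (ends x) w • (if x ∈ CE then c else 0) =
        ∑ x ∈ CE, edgeCount (ends x) w • (fun _ => c) x := by
      simp only [smul_ite, smul_zero]
      rw [← sum_filter]
      congr 1
      ext; simp
    rw [h1, hE.boundary]
    apply sum_eq_zero
    intro i _
    rw [CharTwo.add_self_eq_zero]; simp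
  · intro x hx
    simpa [hx] using hs x hx

lemma prod_sign (B : ℕ → Prop) [DecidablePred B] (S : Finset ℕ) :
    ∏ u ∈ S, (if B u then -1 else 1 : ℤ) =
      if ∑ u ∈ S, (if B u then 1 else 0 : ZMod 2) = 0 then 1 else -1 := by
  induction S using Finset.induction_on with
  | empty => simp
  | insert a S ha ih =>
    rw [prod_insert ha, sum_insert ha, ih]
    generalize ∑ u ∈ S, (if B u then 1 else 0 : ZMod 2) = t
    by_cases hB : B a
    · simp only [hB, if_true]
      revert t; decide
    · simp [hB]

lemma cell_bicolor {g : E → ZMod 2 × ZMod 2} {σ : ℕ → ℕ} {ω : E → ℕ} (hω : ∀ x, 0 < ω x)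
    (H : ℕ → E → ZMod 2) (R : Finset ℕ)
    (hH : ∀ u ∈ R, ∀ q ≤ n, H u (e q) = if u ≤ q ∧ q < σ u then 1 else 0)
    (hbal : ∀ S ⊆ R, ∀ c c' : ZMod 2 × ZMod 2,
      ∑ i ∈ range n, (if flipS g H S (e i) = c then (ω (e i) : ℤ) else 0) =
      ∑ i ∈ range n, (if flipS g H S (e i) = c' then (ω (e i) : ℤ) else 0))
    {p₀ : ℕ} (hp₀ : p₀ < n) :
    ∃ q < n, g (e q) = g (e p₀) + (0, 1) ∧
      ∀ u ∈ R, ((u ≤ q ∧ q < σ u) ↔ (u ≤ p₀ ∧ p₀ < σ u)) := by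
  set c := g (e p₀) with hc
  let s : ℕ → ℤ := fun p => (if g (e p) = c then (ω (e p) : ℤ) else 0) -
    (if g (e p) = c + (0, 1) then (ω (e p) : ℤ) else 0)
  let A : ℕ → ℕ → ℤ := fun p u => if u ≤ p ∧ p < σ u then -1 else 1
  have h1 : ∀ S ⊆ R, ∑ p ∈ range n, s p * ∏ u ∈ S, A p u = 0 := by
    intro S hS
    have h2 : ∀ p ∈ range n, s p * ∏ u ∈ S, A p u =
        (if flipS g H S (e p) = c then (ω (e p) : ℤ) else 0) -
        (if flipS g H S (e p) = c + (0, 1) then (ω (e p) : ℤ) else 0) := by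
      intro p hp
      rw [mem_range] at hp
      have h3 : ∑ u ∈ S, H u (e p) = ∑ u ∈ S, (if u ≤ p ∧ p < σ u then 1 else 0 : ZMod 2) :=
        sum_congr rfl fun u hu => hH u (hS hu) p hp.le
      have hfl : flipS g H S (e p) = ((g (e p)).1, (g (e p)).2 +
          ∑ u ∈ S, (if u ≤ p ∧ p < σ u then 1 else 0 : ZMod 2)) := by
        simp only [flipS]; rw [h3]
      rw [hfl]
      simp only [s, A]
      rw [prod_sign (fun u => u ≤ p ∧ p < σ u)]
      generalize ∑ u ∈ S, (if u ≤ p ∧ p < σ u then 1 else 0 : ZMod 2) = t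
      generalize g (e p) = x
      generalize (ω (e p) : ℤ) = w
      have ht' : ∀ t : ZMod 2, t = 0 ∨ t = 1 := by decide
      have ht := ht' t
      have hx1' : ∀ x c : ZMod 2 × ZMod 2, x = c ↔ (x.1, x.2 + 1) = c + (0, 1) := by decide
      have hx2' : ∀ x c : ZMod 2 × ZMod 2, x = c + (0, 1) ↔ (x.1, x.2 + 1) = c := by decide
      have hx1 := hx1' x c
      have hx2 := hx2' x c
      rcases ht with rfl | rfl
      · simp
      · rw [if_neg (show (1 : ZMod 2) ≠ 0 by decide), if_congr hx1 rfl rfl, if_congr hx2 rfl rfl]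
        ring
    rw [sum_congr rfl h2, sum_sub_distrib, hbal S hS c (c + (0, 1)), sub_self]
  have h2 : ∑ p ∈ range n, s p * ∏ u ∈ R, (1 + A p u * A p₀ u) = 0 := by
    have h3 : ∀ p, s p * ∏ u ∈ R, (1 + A p u * A p₀ u) =
        ∑ S ∈ R.powerset, (s p * ∏ u ∈ S, A p u) * ∏ u ∈ S, A p₀ u := by
      intro p
      rw [prod_one_add, mul_sum]
      apply sum_congr rfl
      intro S _
      rw [prod_mul_distrib, mul_assoc]
    simp only [h3]
    rw [sum_comm]
    apply sum_eq_zero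
    intro S hS
    rw [← sum_mul, h1 S (mem_powerset.1 hS), zero_mul]
  by_contra hcon
  push Not at hcon
  have hA2 : ∀ p u, 0 ≤ 1 + A p u * A p₀ u := by
    intro p u; simp only [A]; split_ifs <;> norm_num
  have hnn : ∀ p ∈ range n, 0 ≤ s p * ∏ u ∈ R, (1 + A p u * A p₀ u) := by
    intro p hp
    rw [mem_range] at hp
    by_cases hgp : g (e p) = c + (0, 1)
    · obtain ⟨u, hu, hne⟩ := hcon p hp hgp
      have : ∏ u ∈ R, (1 + A p u * A p₀ u) = 0 := by
        apply prod_eq_zero hu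
        simp only [A]
        by_cases ha : u ≤ p ∧ p < σ u <;> by_cases hb : u ≤ p₀ ∧ p₀ < σ u
        · exfalso; omega
        · rw [if_pos ha, if_neg hb]; norm_num
        · rw [if_neg ha, if_pos hb]; norm_num
        · exfalso; omega
      rw [this, mul_zero]
    · apply mul_nonneg
      · simp only [s, if_neg hgp, sub_zero]
        split_ifs <;> positivity
      · exact prod_nonneg fun u _ => hA2 p u
  have h3 := (sum_eq_zero_iff_of_nonneg hnn).1 h2 p₀ (mem_range.2 hp₀)
  have h4 : 0 < s p₀ := by
    have hne : c ≠ c + (0, 1) := by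
      have h : ∀ c : ZMod 2 × ZMod 2, c ≠ c + (0, 1) := by decide
      exact h c
    simp only [s, ← hc, if_true, if_neg hne, sub_zero]
    exact_mod_cast hω (e p₀)
  have h5 : 0 < ∏ u ∈ R, (1 + A p₀ u * A p₀ u) := by
    apply prod_pos
    intro u _
    simp only [A]; split_ifs <;> norm_num
  have h6 := mul_pos h4 h5
  omega

open Classical in
/-- Number of jumps of colour `(0,1)`. -/
noncomputable def numJ (e : ℕ → E) (n : ℕ) (g : E → ZMod 2 × ZMod 2) : ℕ :=
  ((Ioc 0 n).filter (fun i => jump e g i = (0, 1))).card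

lemma descent (hE : Enum ends CE n e v) {ω : E → ℕ} (hω : ∀ x, 0 < ω x)
    (hbal : ∀ g, Valid ends CE g → ∀ c c' : ZMod 2 × ZMod 2,
      ∑ i ∈ range n, (if g (e i) = c then (ω (e i) : ℤ) else 0) =
      ∑ i ∈ range n, (if g (e i) = c' then (ω (e i) : ℤ) else 0))
    {g : E → ZMod 2 × ZMod 2} (hg : Valid ends CE g) :
    ∃ g', Valid ends CE g' ∧ numJ e n g' < numJ e n g := by
  classical
  -- the pairing
  set Ts := (Ioc 0 n).filter (fun i => (jump e g i).1 ≠ 0) with hTs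
  obtain ⟨σ, hσ⟩ := exists_pairing (fun i j => Conn ends CE g (v i) (v j))
    ⟨fun i => (conn_equiv ends CE g).refl _, fun h => (conn_equiv ends CE g).symm h,
      fun h h' => (conn_equiv ends CE g).trans h h'⟩ Ts.card Ts rfl
    (fun i _ => by convert class_even hE hg.1 (v i))
  have hTm : ∀ i, i ∈ Ts ↔ (0 < i ∧ i ≤ n) ∧ (jump e g i).1 ≠ 0 := by
    intro i; rw [hTs, mem_filter, mem_Ioc]
  set R := Ts.filter (fun u => u < σ u) with hR
  have hex : ∀ u, ∃ H : E → ZMod 2, u ∈ R → (∀ w, ∑ x, edgeCount (ends x) w • H x = 0) ∧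
      (∀ x, x ∉ CE → (g x).1 = 0 → H x = 0) ∧
      ∀ q ≤ n, H (e q) = if u ≤ q ∧ q < σ u then 1 else 0 := by
    intro u
    by_cases hu : u ∈ R
    · have hu' := hu
      rw [hR, mem_filter] at hu
      obtain ⟨h1, h2, h3, h4⟩ := hσ u hu.1
      obtain ⟨H, hH⟩ := exists_chain (g := g) hE ((hTm u).1 hu.1).1.1 hu.2.le
        ((hTm _).1 h1).1.2 h4
      exact ⟨H, fun _ => hH⟩
    · exact ⟨0, fun h => absurd h hu⟩
  choose H hH using hex
  have hval : ∀ S ⊆ R, Valid ends CE (flipS g H S) := fun S hS =>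
    flip_valid hg H S (fun u hu => (hH u (hS hu)).1) (fun u hu => (hH u (hS hu)).2.1)
  have hHv : ∀ u ∈ R, ∀ q ≤ n, H u (e q) = if u ≤ q ∧ q < σ u then 1 else 0 :=
    fun u hu => (hH u hu).2.2
  have hcell : ∀ p ≤ n, ∃ q < n, g (e q) = g (e p) + (0, 1) ∧
      ∀ u ∈ R, ((u ≤ q ∧ q < σ u) ↔ (u ≤ p ∧ p < σ u)) := by
    intro p hp
    have hc := fun {p₀} (h : p₀ < n) => cell_bicolor (e := e) (g := g) (σ := σ) hω H R hHv
      (fun S hS => hbal _ (hval S hS)) (p₀ := p₀) h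
    rcases Nat.eq_or_lt_of_le hp with h | h
    · obtain ⟨q, hq, h1, h2⟩ := hc hE.pos
      refine ⟨q, hq, by rw [h1, h, hE.closeE], ?_⟩
      intro u hu
      rw [h2 u hu]
      rw [hR, mem_filter] at hu
      have h3 := (hTm u).1 hu.1
      have h4 := (hTm _).1 (hσ u hu.1).1
      omega
    · exact hc h
  -- apply the counting inequality
  let T : ℕ → Prop := fun i => i ∈ Ts
  let z : ℕ → Bool := fun i => decide ((g (e i)).2 = 1)
  have hp : Pairing T σ := fun u hu => ⟨(hσ u hu).1, (hσ u hu).2.1, (hσ u hu).2.2.1⟩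
  have hclo : ∀ p q, p ≤ q →
      (∀ u ∈ R, ((u ≤ q ∧ q < σ u) ↔ (u ≤ p ∧ p < σ u))) → Clo T σ p q := by
    intro p q hpq hiff u hu1 hu2 hT
    obtain ⟨h1, h2, h3, -⟩ := hσ u hT
    rcases Nat.lt_or_gt_of_ne h3 with h | h
    · have := hiff (σ u) (by rw [hR, mem_filter, h2]; exact ⟨h1, h⟩)
      rw [h2] at this
      omega
    · have := hiff u (by rw [hR, mem_filter]; exact ⟨hT, h⟩)
      omega
  have hmain := count_main (n := n) (z := z) hp (by
    intro p hp
    obtain ⟨q, hq, h1, h2⟩ := hcell p hp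
    refine ⟨q, hq.le, ?_, ?_⟩
    · simp only [z, h1]
      generalize g (e p) = x
      revert x; decide
    · rcases Nat.le_total p q with h | h
      · exact Or.inl ⟨h, hclo p q h h2⟩
      · exact Or.inr ⟨h, hclo q p h (fun u hu => (h2 u hu).symm)⟩)
    (by
      intro u _ _ hT
      exact ((hTm _).1 (hσ u hT).1).1)
    (by simp only [z, hE.closeE])
  -- rewrite the weight
  have hzj : ∀ i, (z (i - 1) ^^ z i) = decide ((jump e g i).2 = 1) := by
    intro i
    have h : ∀ x y : ZMod 2 × ZMod 2,
        (decide (x.2 = 1) ^^ decide (y.2 = 1)) = decide ((x + y).2 = 1) := by decide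
    simp only [z, jump]
    exact h _ _
  set Mx := Ts.filter (fun i => (jump e g i).2 ≠ (jump e g (σ i)).2) with hMx
  have hsum : ∑ i ∈ Ioc 0 n, wt T σ z i = (Mx.card : ℤ) - 2 * (numJ e n g : ℤ) := by
    have h1 : ∀ i ∈ Ioc 0 n, wt T σ z i =
        (if (jump e g i).1 ≠ 0 ∧ (jump e g i).2 ≠ (jump e g (σ i)).2 then 1 else 0) -
        2 * (if jump e g i = (0, 1) then 1 else 0) := by
      intro i hi
      have hTi : T i ↔ (jump e g i).1 ≠ 0 := by
        simp only [T]; rw [hTm, ← mem_Ioc]; simp [hi]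
      unfold wt
      have h2 : (z (i - 1) = z i) ↔ (z (i - 1) ^^ z i) = false := by simp
      rw [if_congr h2 rfl rfl]
      simp only [hzj]
      rw [if_congr hTi rfl rfl]
      generalize jump e g i = x
      generalize jump e g (σ i) = y
      revert x y; decide
    rw [sum_congr rfl h1, sum_sub_distrib, ← mul_sum, hMx, hTs, filter_filter, numJ,
      card_filter, card_filter]
    push_cast
    rfl
  rw [hsum] at hmain
  -- flip the pairs with jump (1,0)
  set S := R.filter (fun u => jump e g u = (1, 0) ∧ jump e g (σ u) = (1, 0)) with hS
  have hSR : S ⊆ R := filter_subset _ _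
  set M1 := Mx.filter (fun i => jump e g i = (1, 0)) with hM1
  set M2 := Mx.filter (fun i => ¬ jump e g i = (1, 0)) with hM2
  have hM12 : M1.card ≤ M2.card := by
    apply card_le_card_of_injOn σ
    · intro i hi
      have hi : i ∈ M1 := hi
      rw [hM1, mem_filter, hMx, mem_filter] at hi
      obtain ⟨⟨hiT, hne⟩, hj⟩ := hi
      obtain ⟨h1, h2, h3, -⟩ := hσ i hiT
      show σ i ∈ M2
      rw [hM2, mem_filter, hMx, mem_filter, h2]
      refine ⟨⟨h1, Ne.symm hne⟩, fun h => hne ?_⟩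
      rw [h, hj]
    · intro i hi j hj hij
      have hi : i ∈ M1 := hi
      have hj : j ∈ M1 := hj
      rw [hM1, mem_filter, hMx, mem_filter] at hi hj
      rw [← (hσ i hi.1.1).2.1, ← (hσ j hj.1.1).2.1]
      exact congrArg σ hij
  have hMsum : M1.card + M2.card = Mx.card := card_filter_add_card_filter_not _
  have hnew : numJ e n (fun x => (flipS g H S x).swap) ≤ M1.card := by
    unfold numJ
    apply card_le_card
    intro i hi
    rw [mem_filter] at hi
    obtain ⟨hin, hj⟩ := hi
    have hin' := mem_Ioc.1 hin
    -- the new jump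
    have hjump : (jump e g i).1 = 1 ∧
        (jump e g i).2 + ∑ u ∈ S, ((if i = u then 1 else 0) + (if i = σ u then 1 else 0)) = 0 := by
      have e1 : jump e (fun x => (flipS g H S x).swap) i =
          ((jump e g i).2 + ∑ u ∈ S, (H u (e (i - 1)) + H u (e i)), (jump e g i).1) := by
        simp only [jump, flipS, sum_add_distrib]
        ext
        · simp only [Prod.fst_add, Prod.snd_add, Prod.swap, Prod.fst, Prod.snd]; ring
        · simp
      rw [e1, Prod.mk.injEq] at hj
      refine ⟨hj.2, ?_⟩
      refine Eq.trans ?_ hj.1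
      congr 1
      apply sum_congr rfl
      intro u hu
      have huR := hSR hu
      rw [hHv u huR _ (by omega), hHv u huR _ (by omega)]
      have hlt : u < σ u := (mem_filter.1 huR).2
      have h0 : 0 < u := ((hTm u).1 (mem_filter.1 huR).1).1.1
      by_cases c1 : i = u
      · rw [if_pos c1, if_neg (show ¬ i = σ u by omega),
          if_neg (show ¬ (u ≤ i - 1 ∧ i - 1 < σ u) by omega),
          if_pos (show u ≤ i ∧ i < σ u by omega)]
        decide
      · by_cases c2 : i = σ u
        · rw [if_neg c1, if_pos c2, if_pos (show (u ≤ i - 1 ∧ i - 1 < σ u) by omega),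
            if_neg (show ¬ (u ≤ i ∧ i < σ u) by omega)]
          decide
        · rw [if_neg c1, if_neg c2]
          by_cases c3 : u ≤ i ∧ i < σ u
          · rw [if_pos c3, if_pos (show (u ≤ i - 1 ∧ i - 1 < σ u) by omega)]
            decide
          · rw [if_neg c3, if_neg (show ¬ (u ≤ i - 1 ∧ i - 1 < σ u) by omega)]
    obtain ⟨hj1, hj2⟩ := hjump
    have hiT : i ∈ Ts := (hTm i).2 ⟨hin', by rw [hj1]; decide⟩
    obtain ⟨k1, k2, k3, -⟩ := hσ i hiT
    -- sum when not in a flipped pair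
    have hnone : i ∉ S → σ i ∉ S →
        ∑ u ∈ S, ((if i = u then 1 else 0) + (if i = σ u then 1 else 0) : ZMod 2) = 0 := by
      intro n1 n2
      apply sum_eq_zero
      intro u hu
      have huT : u ∈ Ts := (mem_filter.1 (hSR hu)).1
      rw [if_neg (fun (h : i = u) => n1 (by rw [h]; exact hu)), if_neg, add_zero]
      intro h
      apply n2
      rw [h, (hσ u huT).2.1]; exact hu
    have hmem : i ∈ S ∨ σ i ∈ S →
        ∑ u ∈ S, ((if i = u then 1 else 0) + (if i = σ u then 1 else 0) : ZMod 2) = 1 := by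
      have huniq : ∀ u ∈ S, i = u ∨ i = σ u → ∀ u' ∈ S, u' ≠ u →
          ((if i = u' then 1 else 0) + (if i = σ u' then 1 else 0) : ZMod 2) = 0 := by
        intro u hu hiu u' hu' hne
        have q1 := mem_filter.1 (hSR hu)
        have q2 := mem_filter.1 (hSR hu')
        have q3 := (hσ u q1.1).2.1
        have q4 := (hσ u' q2.1).2.1
        have r1 : ¬ i = u' := by
          rintro rfl
          rcases hiu with h | h
          · exact hne h
          · have := q2.2; rw [h, q3, ← h] at this
            have := q1.2; omega
        have r2 : ¬ i = σ u' := by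
          intro h
          rcases hiu with h' | h'
          · subst h'
            have := q1.2; have := q2.2
            have : σ i = u' := by rw [h, q4]
            omega
          · apply hne; rw [← q4, ← h, h', q3]
        rw [if_neg r1, if_neg r2, add_zero]
      rintro (h | h)
      · rw [sum_eq_single_of_mem i h (huniq i h (Or.inl rfl)), if_pos rfl, if_neg k3.symm, add_zero]
      · rw [sum_eq_single_of_mem (σ i) h (huniq (σ i) h (Or.inr k2.symm)), if_neg k3.symm,
          if_pos k2.symm, zero_add]
    have hinS : jump e g i = (1, 0) → jump e g (σ i) = (1, 0) → i ∈ S ∨ σ i ∈ S := by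
      intro a1 a2
      rcases Nat.lt_or_gt_of_ne k3 with h | h
      · right
        rw [hS, mem_filter, hR, mem_filter, k2]
        exact ⟨⟨k1, h⟩, a2, a1⟩
      · left
        rw [hS, mem_filter, hR, mem_filter]
        exact ⟨⟨hiT, h⟩, a1, a2⟩
    have hSin : i ∈ S ∨ σ i ∈ S → jump e g i = (1, 0) ∧ jump e g (σ i) = (1, 0) := by
      rintro (h | h)
      · exact (mem_filter.1 h).2
      · have := (mem_filter.1 h).2
        rw [k2] at this
        exact this.symm
    have hσ1 : (jump e g (σ i)).1 = 1 := by
      have := ((hTm _).1 k1).2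
      generalize (jump e g (σ i)).1 = t at this
      revert t; decide
    by_cases hflip : i ∈ S ∨ σ i ∈ S
    · exfalso
      rw [hmem hflip, (hSin hflip).1] at hj2
      exact absurd hj2 (by decide)
    · have hj0 : jump e g i = (1, 0) := by
        push Not at hflip
        rw [hnone hflip.1 hflip.2, add_zero] at hj2
        exact Prod.ext hj1 hj2
      rw [hM1, mem_filter, hMx, mem_filter]
      refine ⟨⟨hiT, fun heq => hflip (hinS hj0 ?_)⟩, hj0⟩
      refine Prod.ext hσ1 ?_
      rw [← heq, hj0]
  exact ⟨_, swap_valid (hval S hSR), by omega⟩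

lemma no_bad (hE : Enum ends CE n e v) {ω : E → ℕ} (hω : ∀ x, 0 < ω x)
    (hbal : ∀ g, Valid ends CE g → ∀ c c' : ZMod 2 × ZMod 2,
      ∑ i ∈ range n, (if g (e i) = c then (ω (e i) : ℤ) else 0) =
      ∑ i ∈ range n, (if g (e i) = c' then (ω (e i) : ℤ) else 0)) :
    ∀ (m : ℕ) (g : E → ZMod 2 × ZMod 2), numJ e n g = m → ¬ Valid ends CE g := by
  intro m
  induction m using Nat.strong_induction_on with
  | _ m ih =>
  intro g hm hg
  obtain ⟨g', h1, h2⟩ := descent hE hω hbal hg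
  exact ih _ (hm ▸ h2) g' rfl h1
end main


theorem fan_conjecture_35 {V E : Type} [Fintype V] [Fintype E] [DecidableEq V]
    (ends : E → Sym2 V) (CE : Finset E) (hC : IsCircuit ends CE)
    (ω : E → ℕ) (hω : ∀ e, 0 < ω e) (h35 : ∑ e ∈ CE, ω e ≤ 35)
    (f : E → ZMod 2 × ZMod 2) (hf : IsFlow ends f) (hsupp : ∀ e, e ∉ CE → f e ≠ 0) :
    ∃ g : E → ZMod 2 × ZMod 2, IsFlow ends g ∧ (∀ e, e ∉ CE → g e ≠ 0) ∧
      4 * ∑ e ∈ CE.filter (fun e => g e = 0), ω e < ∑ e ∈ CE, ω e := by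
  classical
  obtain ⟨n, e₀, v, hn, ht, hv, himg⟩ := exists_euler ends CE hC
  let e : ℕ → E := fun i => if i < n then e₀ i else e₀ 0
  have he : ∀ i < n, e i = e₀ i := fun i hi => by simp [e, hi]
  have hE : Enum ends CE n e v := by
    refine ⟨hn, ?_, ?_, ?_, hv, by simp [e], ?_⟩
    · intro i hi j hj h
      rw [he i hi, he j hj] at h
      exact ht.1 i hi j hj h
    · intro i _
      simp only [e]
      split_ifs with h
      · exact (ht.2 i h).1
      · exact (ht.2 0 hn).1
    · intro i hi; rw [he i hi]; exact (ht.2 i hi).2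
    · intro x hx
      rw [← himg] at hx
      obtain ⟨i, hi, rfl⟩ := mem_image.1 hx
      exact ⟨i, mem_range.1 hi, he i (mem_range.1 hi)⟩
  by_contra hcon
  push Not at hcon
  refine no_bad hE hω ?_ _ f rfl ⟨hf, hsupp⟩
  intro g hg
  -- weights of the colour classes
  let W : ZMod 2 × ZMod 2 → ℤ := fun c => ∑ i ∈ range n, if g (e i) = c then (ω (e i) : ℤ) else 0
  have htot : ((∑ x ∈ CE, ω x : ℕ) : ℤ) = ∑ i ∈ range n, (ω (e i) : ℤ) := by
    rw [hE.sum_CE]; push_cast; rfl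
  have hge : ∀ c, ∑ i ∈ range n, (ω (e i) : ℤ) ≤ 4 * W c := by
    intro c
    have hv2 := const_valid hE hg c
    have h1 := hcon _ hv2.1 hv2.2
    rw [← htot]
    have h2 : ((∑ x ∈ CE.filter (fun x => (g x + if x ∈ CE then c else 0) = 0), ω x : ℕ) : ℤ)
        = W c := by
      rw [sum_filter, hE.sum_CE]
      push_cast
      apply sum_congr rfl
      intro i hi
      rw [if_pos (hE.mem i (mem_range.1 hi).le)]
      have : g (e i) + c = 0 ↔ g (e i) = c := by
        have h : ∀ x c : ZMod 2 × ZMod 2, x + c = 0 ↔ x = c := by decide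
        exact h _ _
      rw [if_congr this rfl rfl]
    rw [← h2]
    exact_mod_cast h1
  have hsum : W (0, 0) + W (0, 1) + W (1, 0) + W (1, 1) = ∑ i ∈ range n, (ω (e i) : ℤ) := by
    simp only [W, ← sum_add_distrib]
    apply sum_congr rfl
    intro i _
    have : ∀ x : ZMod 2 × ZMod 2, x = (0, 0) ∨ x = (0, 1) ∨ x = (1, 0) ∨ x = (1, 1) := by decide
    rcases this (g (e i)) with h | h | h | h <;> rw [h] <;> simp
  have hall : ∀ c, 4 * W c = ∑ i ∈ range n, (ω (e i) : ℤ) := by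
    intro c
    have a1 := hge (0, 0)
    have a2 := hge (0, 1)
    have a3 := hge (1, 0)
    have a4 := hge (1, 1)
    have : ∀ x : ZMod 2 × ZMod 2, x = (0, 0) ∨ x = (0, 1) ∨ x = (1, 0) ∨ x = (1, 1) := by decide
    rcases this c with h | h | h | h <;> rw [h] <;> linarith
  intro c c'
  have b1 := hall c
  have b2 := hall c'
  show W c = W c'
  linarith
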